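/- Let AN be a well-formed acyclic net. Then: (1) the set of scenarios of AN is exactly the set of scenarios induced by the step sequences of AN, i.e., scenarios(AN) = scenario_AN(sseq(AN)); and (2) the set of maximal scenarios of AN is exactly the set of scenarios induced by the maximal step sequences of AN, i.e., maxscenarios(AN) = scenario_AN(maxsseq(AN)). -/

import Mathlib

/-- A net: a triple of places, transitions, and a flow relation. -/
structure Net (α : Type*) where
  places : Set α
  transitions : Set α
  flow : α → α → Prop

namespace Net

variable {α : Type*}

/-- The set of direct predecessors (preset) of a node. -/
def pre (N : Net α) (x : α) : Set α := {z | N.flow z x}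

/-- The set of direct successors (postset) of a node. -/
def post (N : Net α) (x : α) : Set α := {z | N.flow x z}

/-- Preset of a set of nodes. -/
def preSet (N : Net α) (X : Set α) : Set α := ⋃ x ∈ X, N.pre x

/-- Postset of a set of nodes. -/
def postSet (N : Net α) (X : Set α) : Set α := ⋃ x ∈ X, N.post x

/-- Initial places: places with empty preset. -/
def initPlaces (N : Net α) : Set α := {p ∈ N.places | N.pre p = ∅}

/-- Final places: places with empty postset. -/
def finPlaces (N : Net α) : Set α := {p ∈ N.places | N.post p = ∅}

/-- An acyclic net: places and transitions are disjoint finite sets, places nonempty,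
the flow relation relates only places to transitions and vice versa, is acyclic, and
every transition has at least one pre-place and one post-place. -/
def IsAcyclicNet (N : Net α) : Prop :=
  N.places.Finite ∧ N.transitions.Finite ∧
  Disjoint N.places N.transitions ∧
  (∀ x y, N.flow x y →
    (x ∈ N.places ∧ y ∈ N.transitions) ∨ (x ∈ N.transitions ∧ y ∈ N.places)) ∧
  N.places.Nonempty ∧
  (∀ x, ¬ Relation.TransGen N.flow x x) ∧
  (∀ t ∈ N.transitions, (N.pre t).Nonempty ∧ (N.post t).Nonempty)

/-- An occurrence net: an acyclic net with `|pre p| ≤ 1` and `|post p| ≤ 1` for each place. -/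
def IsOccurrenceNet (N : Net α) : Prop :=
  IsAcyclicNet N ∧ ∀ p ∈ N.places, (N.pre p).Subsingleton ∧ (N.post p).Subsingleton

/-- A backward deterministic acyclic net: an acyclic net with `|pre p| ≤ 1` for each place. -/
def IsBDAN (N : Net α) : Prop :=
  IsAcyclicNet N ∧ ∀ p ∈ N.places, (N.pre p).Subsingleton

/-- `N` is a subnet of `M`: nonempty set of places included, transitions included,
flow is the restriction of that of `M`, and every transition of `N` retains its
full preset and postset from `M`. -/
def IsSubnet (N M : Net α) : Prop :=
  N.places.Nonempty ∧ N.places ⊆ M.places ∧ N.transitions ⊆ M.transitions ∧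
  (∀ x y, N.flow x y ↔ M.flow x y ∧
    ((x ∈ N.places ∧ y ∈ N.transitions) ∨ (x ∈ N.transitions ∧ y ∈ N.places))) ∧
  (∀ t ∈ N.transitions, N.pre t = M.pre t ∧ N.post t = M.post t)

/-- `N` is a co-initial subnet of `M` : a subnet with the same initial places. -/
def CoInitial (N M : Net α) : Prop := IsSubnet N M ∧ N.initPlaces = M.initPlaces

/-- A step: a nonempty set of transitions with pairwise disjoint presets. -/
def IsStep (N : Net α) (U : Set α) : Prop :=
  U.Nonempty ∧ U ⊆ N.transitions ∧ ∀ t ∈ U, ∀ u ∈ U, t ≠ u → N.pre t ∩ N.pre u = ∅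

/-- A step `U` is enabled at marking `M` if all its pre-places are in `M`. -/
def Enabled (N : Net α) (M U : Set α) : Prop := IsStep N U ∧ N.preSet U ⊆ M

/-- Executing an enabled step `U` at `M` yields `M' = (M ∪ post U) \ pre U`. -/
def StepTrans (N : Net α) (M U M' : Set α) : Prop :=
  Enabled N M U ∧ M' = (M ∪ N.postSet U) \ N.preSet U

/-- Step sequences from a marking to a marking. -/
inductive StepSeqFrom (N : Net α) : Set α → List (Set α) → Set α → Prop
  | nil (M : Set α) : StepSeqFrom N M [] M
  | cons {M U M' σ M''} : StepTrans N M U M' → StepSeqFrom N M' σ M'' →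
      StepSeqFrom N M (U :: σ) M''

/-- The initial marking: the set of initial places. -/
def initMarking (N : Net α) : Set α := N.initPlaces

/-- Step sequences executable from the initial marking. -/
def sseq (N : Net α) : Set (List (Set α)) := {σ | ∃ M, StepSeqFrom N N.initMarking σ M}

/-- Mixed step sequences: alternating steps and resulting markings from a marking. -/
inductive MixFrom (N : Net α) : Set α → List (Set α × Set α) → Prop
  | nil (M : Set α) : MixFrom N M []
  | cons {M U M' l} : StepTrans N M U M' → MixFrom N M' l → MixFrom N M ((U, M') :: l)

/-- Mixed step sequences from the initial marking, represented as the initial marking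
paired with the list of consecutive (step, marking) pairs. -/
def mixsseq (N : Net α) : Set (Set α × List (Set α × Set α)) :=
  {p | p.1 = N.initMarking ∧ MixFrom N p.1 p.2}

/-- Markings reachable from the initial marking. -/
def reach (N : Net α) : Set (Set α) := {M | ∃ σ, StepSeqFrom N N.initMarking σ M}

/-- Firing sequences: step sequences all of whose steps are singletons. -/
def fseq (N : Net α) : Set (List (Set α)) :=
  {σ | σ ∈ N.sseq ∧ ∀ U ∈ σ, ∃ t, U = {t}}

/-- Maximal step sequences: no step can be appended. -/
def maxsseq (N : Net α) : Set (List (Set α)) :=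
  {σ | σ ∈ N.sseq ∧ ¬ ∃ U, σ ++ [U] ∈ N.sseq}

/-- Maximal mixed step sequences: no step and marking can be appended. -/
def maxmixsseq (N : Net α) : Set (Set α × List (Set α × Set α)) :=
  {p | p ∈ N.mixsseq ∧ ¬ ∃ U M, (p.1, p.2 ++ [(U, M)]) ∈ N.mixsseq}

/-- Final reachable markings: markings reached by maximal step sequences. -/
def finreach (N : Net α) : Set (Set α) :=
  {M | ∃ σ ∈ N.maxsseq, StepSeqFrom N N.initMarking σ M}

/-- A step sequence is well-formed if post-sets of distinct transitions in the same
step are disjoint, and post-sets of distinct steps are disjoint. -/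
def WellFormedSeq (N : Net α) (σ : List (Set α)) : Prop :=
  (∀ U ∈ σ, ∀ t ∈ U, ∀ u ∈ U, t ≠ u → N.post t ∩ N.post u = ∅) ∧
  σ.Pairwise (fun U V => N.postSet U ∩ N.postSet V = ∅)

/-- The set of transitions occurring in a step sequence. -/
def transOf (σ : List (Set α)) : Set α := {t | ∃ U ∈ σ, t ∈ U}

/-- A net is well-formed if each transition occurs in at least one step sequence and
all step sequences are well-formed. -/
def WellFormedNet (N : Net α) : Prop :=
  (∀ t ∈ N.transitions, ∃ σ ∈ N.sseq, t ∈ transOf σ) ∧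
  (∀ σ ∈ N.sseq, N.WellFormedSeq σ)

/-- Scenarios of a net: occurrence nets that are co-initial subnets of it. -/
def scenarios (N : Net α) : Set (Net α) :=
  {S | IsOccurrenceNet S ∧ CoInitial S N}

/-- Maximal scenarios: scenarios not strictly included (co-initially) in another scenario. -/
def maxscenarios (N : Net α) : Set (Net α) :=
  {S | S ∈ N.scenarios ∧ ¬ ∃ S', S' ∈ N.scenarios ∧ S' ≠ S ∧ CoInitial S S'}

/-- The scenario induced by a (well-formed) step sequence `σ`:
transitions are those occurring in `σ`, places are the initial places together with
the postsets of those transitions, and the flow is the restriction. -/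
def inducedScenario (N : Net α) (σ : List (Set α)) : Net α where
  places := N.initMarking ∪ N.postSet (transOf σ)
  transitions := transOf σ
  flow := fun x y => N.flow x y ∧
    ((x ∈ N.initMarking ∪ N.postSet (transOf σ) ∧ y ∈ transOf σ) ∨
     (x ∈ transOf σ ∧ y ∈ N.initMarking ∪ N.postSet (transOf σ)))

end Net

/-!
The proof compares scenarios and step sequences through their sets of transitions. Call a set `T` of
transitions a configuration if it consumes only initial places and places it produces, and if no
place is consumed twice or produced twice by `T`. A scenario is determined by its transitions, and
the sets arising in this way are the configurations. On the other hand the transitions of a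
well-formed step sequence form a configuration, and the marking reached depends on that set only.
Conversely, if `A ⊂ T` and `T` is a configuration, a transition of `T \ A` that is minimal for the
flow relation is enabled once exactly `A` has fired. Hence every configuration is exhausted by some
step sequence, and the maximal step sequences are those whose transitions form a maximal
configuration.
-/

theorem exists_mem_forall_not_transGen {α : Type*} {r : α → α → Prop}
    (hr : ∀ x, ¬ Relation.TransGen r x x) {s : Set α} (hs : s.Finite) (hne : s.Nonempty) :
    ∃ a ∈ s, ∀ b ∈ s, ¬ Relation.TransGen r b a := by
  have : IsStrictOrder α (Relation.TransGen r) :=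
    { irrefl := hr, trans := fun _ _ _ => Relation.TransGen.trans }
  obtain ⟨⟨a, ha⟩, -, hmin⟩ :=
    (hs.wellFoundedOn (r := Relation.TransGen r)).has_min Set.univ ⟨⟨_, hne.some_mem⟩, trivial⟩
  exact ⟨a, ha, fun b hb => hmin ⟨b, hb⟩ trivial⟩

namespace Net

variable {α : Type*} {N S : Net α} {A T U M : Set α} {σ : List (Set α)} {p t : α}

theorem mem_preSet : p ∈ N.preSet T ↔ ∃ t ∈ T, N.flow p t := by
  simp [preSet, pre]

theorem mem_postSet : p ∈ N.postSet T ↔ ∃ t ∈ T, N.flow t p := by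
  simp [postSet, post]

theorem preSet_union : N.preSet (T ∪ U) = N.preSet T ∪ N.preSet U :=
  Set.biUnion_union _ _ _

theorem postSet_union : N.postSet (T ∪ U) = N.postSet T ∪ N.postSet U :=
  Set.biUnion_union _ _ _

theorem postSet_mono (h : A ⊆ T) : N.postSet A ⊆ N.postSet T :=
  Set.biUnion_subset_biUnion_left h

theorem disjoint_initMarking_postSet : Disjoint N.initMarking (N.postSet T) := by
  refine Set.disjoint_left.2 fun p hp hpT => ?_
  obtain ⟨t, -, htp⟩ := mem_postSet.1 hpT
  exact hp.2.subset htp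

namespace IsAcyclicNet

theorem places_finite (h : N.IsAcyclicNet) : N.places.Finite := h.1

theorem transitions_finite (h : N.IsAcyclicNet) : N.transitions.Finite := h.2.1

theorem disjoint (h : N.IsAcyclicNet) : Disjoint N.places N.transitions := h.2.2.1

theorem flow_cases (h : N.IsAcyclicNet) {x y : α} (hxy : N.flow x y) :
    (x ∈ N.places ∧ y ∈ N.transitions) ∨ (x ∈ N.transitions ∧ y ∈ N.places) :=
  h.2.2.2.1 x y hxy

theorem places_nonempty (h : N.IsAcyclicNet) : N.places.Nonempty := h.2.2.2.2.1

theorem not_transGen_flow (h : N.IsAcyclicNet) (x : α) : ¬ Relation.TransGen N.flow x x :=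
  h.2.2.2.2.2.1 x

theorem pre_post_nonempty (h : N.IsAcyclicNet) (ht : t ∈ N.transitions) :
    (N.pre t).Nonempty ∧ (N.post t).Nonempty :=
  h.2.2.2.2.2.2 t ht

theorem pre_subset_places (h : N.IsAcyclicNet) (ht : t ∈ N.transitions) : N.pre t ⊆ N.places :=
  fun _ hp => (h.flow_cases hp).elim And.left
    fun hpt => (Set.disjoint_left.1 h.disjoint hpt.2 ht).elim

theorem post_subset_places (h : N.IsAcyclicNet) (ht : t ∈ N.transitions) : N.post t ⊆ N.places :=
  fun _ hp => (h.flow_cases hp).elim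
    (fun htp => (Set.disjoint_left.1 h.disjoint htp.1 ht).elim) And.right

theorem pre_subset_transitions (h : N.IsAcyclicNet) (hp : p ∈ N.places) :
    N.pre p ⊆ N.transitions :=
  fun _ ht => (h.flow_cases ht).elim
    (fun htp => (Set.disjoint_left.1 h.disjoint hp htp.2).elim) And.left

theorem post_subset_transitions (h : N.IsAcyclicNet) (hp : p ∈ N.places) :
    N.post p ⊆ N.transitions :=
  fun _ ht => (h.flow_cases ht).elim And.right
    fun hpt => (Set.disjoint_left.1 h.disjoint hp hpt.1).elim

theorem places_eq (h : N.IsAcyclicNet) :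
    N.places = N.initMarking ∪ N.postSet N.transitions := by
  refine Set.Subset.antisymm (fun p hp => ?_) (Set.union_subset (Set.sep_subset _ _) ?_)
  · rcases (N.pre p).eq_empty_or_nonempty with hpre | ⟨t, ht⟩
    · exact Or.inl ⟨hp, hpre⟩
    · exact Or.inr (mem_postSet.2 ⟨t, h.pre_subset_transitions hp ht, ht⟩)
  · exact Set.iUnion₂_subset fun t ht => h.post_subset_places ht

theorem initMarking_nonempty (h : N.IsAcyclicNet) : N.initMarking.Nonempty := by
  obtain ⟨p, hp, hmin⟩ :=
    exists_mem_forall_not_transGen h.not_transGen_flow h.places_finite h.places_nonempty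
  refine ⟨p, hp, Set.eq_empty_of_forall_notMem fun t htp => ?_⟩
  have ht : t ∈ N.transitions := h.pre_subset_transitions hp htp
  obtain ⟨q, hqt⟩ := (h.pre_post_nonempty ht).1
  exact hmin q (h.pre_subset_places ht hqt) (.tail (.single hqt) htp)

theorem coInitial_refl (h : N.IsAcyclicNet) : CoInitial N N :=
  ⟨⟨h.places_nonempty, subset_rfl, subset_rfl,
    fun _ _ => ⟨fun hf => ⟨hf, h.flow_cases hf⟩, And.left⟩,
    fun _ _ => ⟨rfl, rfl⟩⟩, rfl⟩

end IsAcyclicNet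

/-- The subnet of `N` spanned by a set `T` of transitions: its places are the initial places of `N`
and those produced by `T`. For the transitions of a step sequence it is the induced scenario. -/
def subnetOn (N : Net α) (T : Set α) : Net α where
  places := N.initMarking ∪ N.postSet T
  transitions := T
  flow x y := N.flow x y ∧
    ((x ∈ N.initMarking ∪ N.postSet T ∧ y ∈ T) ∨ (x ∈ T ∧ y ∈ N.initMarking ∪ N.postSet T))

theorem image_inducedScenario (N : Net α) (s : Set (List (Set α))) :
    N.inducedScenario '' s = N.subnetOn '' (transOf '' s) :=
  (Set.image_image N.subnetOn transOf s).symm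

theorem pre_subnetOn (hT : N.preSet T ⊆ N.initMarking ∪ N.postSet T) (ht : t ∈ T) :
    (N.subnetOn T).pre t = N.pre t :=
  Set.ext fun _ => ⟨And.left, fun hp => ⟨hp, Or.inl ⟨hT (mem_preSet.2 ⟨t, ht, hp⟩), ht⟩⟩⟩

theorem post_subnetOn (ht : t ∈ T) : (N.subnetOn T).post t = N.post t :=
  Set.ext fun _ => ⟨And.left, fun hp => ⟨hp, Or.inr ⟨ht, Or.inr (mem_postSet.2 ⟨t, ht, hp⟩)⟩⟩⟩

theorem initPlaces_subnetOn : (N.subnetOn T).initPlaces = N.initPlaces := by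
  ext p
  constructor
  · rintro ⟨hp | hp, hpre⟩
    · exact hp
    · obtain ⟨t, ht, htp⟩ := mem_postSet.1 hp
      have htp' : t ∈ (N.subnetOn T).pre p := ⟨htp, Or.inr ⟨ht, Or.inr hp⟩⟩
      exact (hpre.subset htp').elim
  · rintro ⟨hp, hpre⟩
    exact ⟨Or.inl ⟨hp, hpre⟩, Set.subset_eq_empty (fun _ => And.left) hpre⟩

theorem coInitial_subnetOn (hne : N.initMarking.Nonempty)
    (hA : N.preSet A ⊆ N.initMarking ∪ N.postSet A)
    (hT : N.preSet T ⊆ N.initMarking ∪ N.postSet T) (hAT : A ⊆ T) :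
    CoInitial (N.subnetOn A) (N.subnetOn T) := by
  have hpl : N.initMarking ∪ N.postSet A ⊆ N.initMarking ∪ N.postSet T :=
    Set.union_subset_union_right _ (postSet_mono hAT)
  refine ⟨⟨hne.mono Set.subset_union_left, hpl, hAT, fun x y => ?_,
    fun t (ht : t ∈ A) => ⟨?_, ?_⟩⟩, ?_⟩
  · exact ⟨fun hf => ⟨⟨hf.1, hf.2.imp (.imp (@hpl x) (@hAT y)) (.imp (@hAT x) (@hpl y))⟩, hf.2⟩,
      fun hf => ⟨hf.1.1, hf.2⟩⟩
  · rw [pre_subnetOn hA ht, pre_subnetOn hT (hAT ht)]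
  · rw [post_subnetOn ht, post_subnetOn (hAT ht)]
  · rw [initPlaces_subnetOn, initPlaces_subnetOn]

theorem CoInitial.places_eq (hSN : CoInitial S N) (hS : S.IsAcyclicNet) :
    S.places = N.initMarking ∪ N.postSet S.transitions := by
  have hpost : S.postSet S.transitions = N.postSet S.transitions :=
    Set.iUnion₂_congr fun t ht => (hSN.1.2.2.2.2 t ht).2
  have hinit : S.initMarking = N.initMarking := hSN.2
  rw [hS.places_eq, hpost, hinit]

theorem CoInitial.eq_subnetOn (hSN : CoInitial S N) (hS : S.IsAcyclicNet) :
    S = N.subnetOn S.transitions := by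
  have hpl := hSN.places_eq hS
  obtain ⟨-, -, -, hflow, -⟩ := hSN.1
  cases S with
  | mk P T F =>
    dsimp only at hpl hflow
    subst hpl
    exact congrArg (Net.mk _ _) (funext₂ fun x y => propext (hflow x y))

theorem IsAcyclicNet.subnetOn_transitions (h : N.IsAcyclicNet) :
    N.subnetOn N.transitions = N :=
  (h.coInitial_refl.eq_subnetOn h).symm

/-- A configuration of `N`: a set of transitions whose preplaces are initial or produced within the
set, and in which distinct transitions share neither preplaces nor postplaces. These are the sets of
transitions of the scenarios of an acyclic net. -/
structure IsConfiguration (N : Net α) (T : Set α) : Prop where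
  subset_transitions : T ⊆ N.transitions
  preSet_subset : N.preSet T ⊆ N.initMarking ∪ N.postSet T
  pairwiseDisjoint_pre : T.PairwiseDisjoint N.pre
  pairwiseDisjoint_post : T.PairwiseDisjoint N.post

theorem IsConfiguration.isAcyclicNet_subnetOn (hT : N.IsConfiguration T) (h : N.IsAcyclicNet) :
    (N.subnetOn T).IsAcyclicNet := by
  have hpl : N.initMarking ∪ N.postSet T ⊆ N.places := by
    rw [h.places_eq]
    exact Set.union_subset_union_right _ (postSet_mono hT.subset_transitions)
  refine ⟨h.places_finite.subset hpl, h.transitions_finite.subset hT.subset_transitions,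
    h.disjoint.mono hpl hT.subset_transitions, fun _ _ => And.right,
    h.initMarking_nonempty.mono Set.subset_union_left, fun x hx => ?_,
    fun t (ht : t ∈ T) => ?_⟩
  · exact h.not_transGen_flow x (Relation.TransGen.mono (fun _ _ => And.left) x x hx)
  · rw [pre_subnetOn hT.preSet_subset ht, post_subnetOn ht]
    exact h.pre_post_nonempty (hT.subset_transitions ht)

theorem IsConfiguration.isOccurrenceNet_subnetOn (hT : N.IsConfiguration T)
    (h : N.IsAcyclicNet) : (N.subnetOn T).IsOccurrenceNet := by
  have hac := hT.isAcyclicNet_subnetOn h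
  refine ⟨hac, fun p hp => ⟨fun t ht u hu => ?_, fun t ht u hu => ?_⟩⟩
  · exact hT.pairwiseDisjoint_post.elim_set (hac.pre_subset_transitions hp ht)
      (hac.pre_subset_transitions hp hu) p ht.1 hu.1
  · exact hT.pairwiseDisjoint_pre.elim_set (hac.post_subset_transitions hp ht)
      (hac.post_subset_transitions hp hu) p ht.1 hu.1

theorem IsConfiguration.subnetOn_mem_scenarios (hT : N.IsConfiguration T) (h : N.IsAcyclicNet) :
    N.subnetOn T ∈ N.scenarios := by
  have hN : N.preSet N.transitions ⊆ N.initMarking ∪ N.postSet N.transitions := by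
    rw [← h.places_eq]
    exact Set.iUnion₂_subset fun t ht => h.pre_subset_places ht
  have hco := coInitial_subnetOn h.initMarking_nonempty hT.preSet_subset hN hT.subset_transitions
  rw [h.subnetOn_transitions] at hco
  exact ⟨hT.isOccurrenceNet_subnetOn h, hco⟩

theorem isConfiguration_of_mem_scenarios (hS : S ∈ N.scenarios) :
    N.IsConfiguration S.transitions := by
  obtain ⟨⟨hac, hdet⟩, hco⟩ := hS
  obtain ⟨-, -, hsub, -, hret⟩ := hco.1
  have flow_pre : ∀ {p t}, t ∈ S.transitions → N.flow p t → S.flow p t :=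
    fun ht hpt => (hret _ ht).1.ge hpt
  have flow_post : ∀ {p t}, t ∈ S.transitions → N.flow t p → S.flow t p :=
    fun ht htp => (hret _ ht).2.ge htp
  refine ⟨hsub, fun p hp => ?_, fun t ht u hu htu => Set.disjoint_left.2 fun p hpt hpu => htu ?_,
    fun t ht u hu htu => Set.disjoint_left.2 fun p htp hup => htu ?_⟩
  · obtain ⟨t, ht, hpt⟩ := mem_preSet.1 hp
    rw [← hco.places_eq hac]
    exact hac.pre_subset_places ht (flow_pre ht hpt)
  · exact (hdet p (hac.pre_subset_places ht (flow_pre ht hpt))).2 (flow_pre ht hpt)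
      (flow_pre hu hpu)
  · exact (hdet p (hac.post_subset_places ht (flow_post ht htp))).1 (flow_post ht htp)
      (flow_post hu hup)

theorem IsAcyclicNet.scenarios_eq_image (h : N.IsAcyclicNet) :
    N.scenarios = N.subnetOn '' {T | N.IsConfiguration T} := by
  refine Set.Subset.antisymm (fun S hS => ?_) ?_
  · exact ⟨S.transitions, isConfiguration_of_mem_scenarios hS, (hS.2.eq_subnetOn hS.1.1).symm⟩
  · rintro _ ⟨T, hT, rfl⟩
    exact hT.subnetOn_mem_scenarios h

theorem IsAcyclicNet.maxscenarios_eq_image (h : N.IsAcyclicNet) :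
    N.maxscenarios = N.subnetOn '' {T | Maximal N.IsConfiguration T} := by
  ext S
  constructor
  · rintro ⟨hS, hmax⟩
    rw [h.scenarios_eq_image] at hS
    obtain ⟨T, hT : N.IsConfiguration T, rfl⟩ := hS
    refine ⟨T, ⟨hT, fun T' hT' hTT' => ?_⟩, rfl⟩
    by_contra hT'T
    refine hmax ⟨_, hT'.subnetOn_mem_scenarios h, fun heq => hT'T (congrArg transitions heq).le, ?_⟩
    exact coInitial_subnetOn h.initMarking_nonempty hT.preSet_subset hT'.preSet_subset hTT'
  · rintro ⟨T, hT : Maximal N.IsConfiguration T, rfl⟩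
    refine ⟨hT.prop.subnetOn_mem_scenarios h, ?_⟩
    rintro ⟨S, hS, hne, ⟨-, -, hTS, -⟩, -⟩
    have hTS : T = S.transitions := hT.eq_of_subset (isConfiguration_of_mem_scenarios hS) hTS
    exact hne (hTS ▸ hS.2.eq_subnetOn hS.1.1)

/-- The marking reached from the initial one when exactly the transitions in `T` have fired, for a
configuration `T`. -/
def markingAfter (N : Net α) (T : Set α) : Set α :=
  (N.initMarking ∪ N.postSet T) \ N.preSet T

theorem markingAfter_empty : N.markingAfter ∅ = N.initMarking := by
  simp [markingAfter, preSet, postSet]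

theorem isConfiguration_empty : N.IsConfiguration ∅ where
  subset_transitions := Set.empty_subset _
  preSet_subset := by simp [preSet]
  pairwiseDisjoint_pre := Set.pairwiseDisjoint_empty
  pairwiseDisjoint_post := Set.pairwiseDisjoint_empty

theorem IsStep.pairwiseDisjoint_pre (hU : N.IsStep U) : U.PairwiseDisjoint N.pre :=
  fun t ht u hu htu => Set.disjoint_iff_inter_eq_empty.2 (hU.2.2 t ht u hu htu)

theorem Enabled.disjoint_preSet (hU : N.Enabled (N.markingAfter T) U) :
    Disjoint (N.preSet T) (N.preSet U) :=
  Set.disjoint_sdiff_right.mono_right hU.2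

theorem Enabled.disjoint (hU : N.Enabled (N.markingAfter T) U)
    (hpre : ∀ t ∈ N.transitions, (N.pre t).Nonempty) : Disjoint T U := by
  refine Set.disjoint_left.2 fun t htT htU => ?_
  obtain ⟨p, hp⟩ := hpre t (hU.1.2.1 htU)
  exact Set.disjoint_left.1 hU.disjoint_preSet
    (mem_preSet.2 ⟨t, htT, hp⟩) (mem_preSet.2 ⟨t, htU, hp⟩)

namespace IsConfiguration

theorem disjoint_postSet (hT : N.IsConfiguration T) (hA : A ⊆ T) (hU : U ⊆ T)
    (hAU : Disjoint A U) : Disjoint (N.postSet A) (N.postSet U) :=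
  Set.disjoint_iUnion₂_left.2 fun _ ht => Set.disjoint_iUnion₂_right.2 fun _ hu =>
    hT.pairwiseDisjoint_post (hA ht) (hU hu) (hAU.ne_of_mem ht hu)

theorem union_of_enabled (hT : N.IsConfiguration T) (hU : N.Enabled (N.markingAfter T) U)
    (hpost : (T ∪ U).PairwiseDisjoint N.post) : N.IsConfiguration (T ∪ U) where
  subset_transitions := Set.union_subset hT.subset_transitions hU.1.2.1
  preSet_subset := by
    rw [preSet_union, postSet_union, ← Set.union_assoc]
    exact (Set.union_subset hT.preSet_subset (hU.2.trans Set.sdiff_subset)).trans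
      Set.subset_union_left
  pairwiseDisjoint_pre := hT.pairwiseDisjoint_pre.union hU.1.pairwiseDisjoint_pre
    fun _ ht _ hu _ => hU.disjoint_preSet.mono
      (Set.subset_biUnion_of_mem ht) (Set.subset_biUnion_of_mem hu)
  pairwiseDisjoint_post := hpost

theorem stepTrans_markingAfter (hT : N.IsConfiguration T)
    (hU : N.Enabled (N.markingAfter T) U) (hpost : Disjoint (N.postSet T) (N.postSet U)) :
    N.StepTrans (N.markingAfter T) U (N.markingAfter (T ∪ U)) := by
  have hpre_post : Disjoint (N.postSet U) (N.preSet T) :=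
    ((disjoint_initMarking_postSet.union_left hpost).mono_left hT.preSet_subset).symm
  refine ⟨hU, ?_⟩
  calc N.markingAfter (T ∪ U)
      = (((N.initMarking ∪ N.postSet T) ∪ N.postSet U) \ N.preSet T) \ N.preSet U := by
        rw [markingAfter, postSet_union, preSet_union, Set.union_assoc, Set.sdiff_sdiff]
    _ = (N.markingAfter T ∪ N.postSet U) \ N.preSet U := by
        rw [Set.union_sdiff_distrib, hpre_post.sdiff_eq_left, markingAfter]

theorem exists_enabled_singleton (hT : N.IsConfiguration T) (h : N.IsAcyclicNet) (hAT : A ⊂ T) :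
    ∃ t ∈ T \ A, N.Enabled (N.markingAfter A) {t} := by
  obtain ⟨t, ⟨ht, htA⟩, hmin⟩ := exists_mem_forall_not_transGen h.not_transGen_flow
    (h.transitions_finite.subset (Set.sdiff_subset.trans hT.subset_transitions))
    (Set.nonempty_of_ssubset hAT)
  refine ⟨t, ⟨ht, htA⟩, ⟨Set.singleton_nonempty t,
    Set.singleton_subset_iff.2 (hT.subset_transitions ht), ?_⟩, fun p hp => ⟨?_, fun hpA => ?_⟩⟩
  · rintro _ rfl _ rfl hne
    exact absurd rfl hne
  all_goals obtain ⟨_, rfl, hpt⟩ := mem_preSet.1 hp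
  · refine (hT.preSet_subset (mem_preSet.2 ⟨_, ht, hpt⟩)).imp_right fun hpT => ?_
    obtain ⟨u, hu, hup⟩ := mem_postSet.1 hpT
    have huA : u ∈ A := by
      by_contra huA
      exact hmin u ⟨hu, huA⟩ (.tail (.single hup) hpt)
    exact mem_postSet.2 ⟨u, huA, hup⟩
  · obtain ⟨u, huA, hpu⟩ := mem_preSet.1 hpA
    have hut := hT.pairwiseDisjoint_pre.elim_set (hAT.subset huA) ht p hpu hpt
    exact htA (hut ▸ huA)

end IsConfiguration

theorem transOf_nil : transOf ([] : List (Set α)) = ∅ := by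
  simp [transOf]

theorem transOf_append_singleton : transOf (σ ++ [U]) = transOf σ ∪ U := by
  ext t
  simp [transOf, or_and_right, exists_or]

theorem stepSeqFrom_append_singleton {M' : Set α} :
    N.StepSeqFrom M (σ ++ [U]) M' ↔ ∃ K, N.StepSeqFrom M σ K ∧ N.StepTrans K U M' := by
  induction σ generalizing M with
  | nil =>
    constructor
    · rintro (_ | ⟨hU, _ | _⟩)
      exact ⟨M, .nil M, hU⟩
    · rintro ⟨_, ⟨⟩, hU⟩
      exact .cons hU (.nil _)
  | cons V σ ih =>
    constructor
    · rintro (_ | ⟨hV, hσU⟩)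
      obtain ⟨K, hσ, hU⟩ := ih.1 hσU
      exact ⟨K, .cons hV hσ, hU⟩
    · rintro ⟨K, _ | ⟨hV, hσ⟩, hU⟩
      exact .cons hV (ih.2 ⟨K, hσ, hU⟩)

theorem postSet_transOf : N.postSet (transOf σ) = ⋃ V ∈ σ, N.postSet V := by
  ext p
  simp only [mem_postSet, transOf, Set.mem_ofPred_eq, Set.mem_iUnion, exists_prop]
  tauto

theorem WellFormedSeq.of_append_singleton (hw : N.WellFormedSeq (σ ++ [U])) :
    N.WellFormedSeq σ :=
  ⟨fun V hV => hw.1 V (List.mem_append_left _ hV), (List.pairwise_append.1 hw.2).1⟩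

theorem WellFormedSeq.pairwiseDisjoint_post (hw : N.WellFormedSeq σ) (hU : U ∈ σ) :
    U.PairwiseDisjoint N.post :=
  fun t ht u hu htu => Set.disjoint_iff_inter_eq_empty.2 (hw.1 U hU t ht u hu htu)

theorem WellFormedSeq.disjoint_postSet (hw : N.WellFormedSeq (σ ++ [U])) :
    Disjoint (N.postSet (transOf σ)) (N.postSet U) := by
  rw [postSet_transOf]
  exact Set.disjoint_iUnion₂_left.2 fun V hV => Set.disjoint_iff_inter_eq_empty.2 <|
    (List.pairwise_append.1 hw.2).2.2 V hV U (List.mem_singleton_self U)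

theorem StepSeqFrom.isConfiguration_and_eq_markingAfter (hσ : N.StepSeqFrom N.initMarking σ M)
    (hw : N.WellFormedSeq σ) :
    N.IsConfiguration (transOf σ) ∧ M = N.markingAfter (transOf σ) := by
  induction σ using List.reverseRecOn generalizing M with
  | nil =>
    cases hσ
    rw [transOf_nil, markingAfter_empty]
    exact ⟨isConfiguration_empty, rfl⟩
  | append_singleton σ U ih =>
    obtain ⟨K, hK, hU, rfl⟩ := stepSeqFrom_append_singleton.1 hσ
    obtain ⟨hconf, rfl⟩ := ih hK hw.of_append_singleton
    have hdisj := hw.disjoint_postSet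
    rw [transOf_append_singleton]
    refine ⟨hconf.union_of_enabled hU ?_, (hconf.stepTrans_markingAfter hU hdisj).2.symm⟩
    exact hconf.pairwiseDisjoint_post.union (hw.pairwiseDisjoint_post (by simp))
      fun _ ht _ hu _ => hdisj.mono (Set.subset_biUnion_of_mem ht) (Set.subset_biUnion_of_mem hu)

theorem append_singleton_mem_sseq_iff (hσ : σ ∈ N.sseq) (hw : N.WellFormedSeq σ) :
    σ ++ [U] ∈ N.sseq ↔ N.Enabled (N.markingAfter (transOf σ)) U := by
  constructor
  · rintro ⟨_, hσU⟩
    obtain ⟨K, hσ, hU, -⟩ := stepSeqFrom_append_singleton.1 hσU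
    obtain ⟨-, rfl⟩ := hσ.isConfiguration_and_eq_markingAfter hw
    exact hU
  · intro hU
    obtain ⟨K, hσ⟩ := hσ
    obtain ⟨-, rfl⟩ := hσ.isConfiguration_and_eq_markingAfter hw
    exact ⟨_, stepSeqFrom_append_singleton.2 ⟨_, hσ, hU, rfl⟩⟩

theorem IsConfiguration.exists_stepSeqFrom (hT : N.IsConfiguration T) (h : N.IsAcyclicNet) :
    ∃ σ, transOf σ = T ∧ N.StepSeqFrom N.initMarking σ (N.markingAfter T) := by
  let R : Set (Set α) := {A | A ⊆ T ∧ N.IsConfiguration A ∧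
    ∃ σ, transOf σ = A ∧ N.StepSeqFrom N.initMarking σ (N.markingAfter A)}
  have hR_finite : R.Finite :=
    (h.transitions_finite.subset hT.subset_transitions).finite_subsets.subset fun A hA => hA.1
  have hR_empty : ∅ ∈ R := ⟨Set.empty_subset T, isConfiguration_empty, [], transOf_nil, by
    rw [markingAfter_empty]
    exact .nil _⟩
  obtain ⟨A, hA⟩ := hR_finite.exists_maximal ⟨∅, hR_empty⟩
  obtain ⟨hAT, hA_conf, σ, hσA, hσ⟩ := hA.prop
  obtain rfl | hAT := hAT.eq_or_ssubset
  · exact ⟨σ, hσA, hσ⟩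
  obtain ⟨t, ⟨ht, htA⟩, hen⟩ := hT.exists_enabled_singleton h hAT
  have hsub : A ∪ {t} ⊆ T := Set.union_subset hAT.subset (Set.singleton_subset_iff.2 ht)
  have hdisj : Disjoint (N.postSet A) (N.postSet {t}) :=
    hT.disjoint_postSet hAT.subset (Set.singleton_subset_iff.2 ht)
      (Set.disjoint_singleton_right.2 htA)
  have hstep := hA_conf.stepTrans_markingAfter hen hdisj
  have hmem : A ∪ {t} ∈ R :=
    ⟨hsub, hA_conf.union_of_enabled hen (hT.pairwiseDisjoint_post.subset hsub), σ ++ [{t}],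
      by rw [transOf_append_singleton, hσA], stepSeqFrom_append_singleton.2 ⟨_, hσ, hstep⟩⟩
  exact absurd (hA.le_of_ge hmem Set.subset_union_left (Or.inr rfl)) htA

theorem IsAcyclicNet.image_transOf_sseq (h : N.IsAcyclicNet)
    (hwf : ∀ σ ∈ N.sseq, N.WellFormedSeq σ) :
    transOf '' N.sseq = {T | N.IsConfiguration T} := by
  ext T
  constructor
  · rintro ⟨σ, hσ, rfl⟩
    exact (hσ.choose_spec.isConfiguration_and_eq_markingAfter (hwf σ hσ)).1
  · intro hT
    obtain ⟨σ, hσT, hσ⟩ := IsConfiguration.exists_stepSeqFrom hT h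
    exact ⟨σ, ⟨_, hσ⟩, hσT⟩

theorem IsAcyclicNet.mem_maxsseq_iff (h : N.IsAcyclicNet)
    (hwf : ∀ σ ∈ N.sseq, N.WellFormedSeq σ) :
    σ ∈ N.maxsseq ↔ σ ∈ N.sseq ∧ Maximal N.IsConfiguration (transOf σ) := by
  have hconf : ∀ {τ}, τ ∈ N.sseq → N.IsConfiguration (transOf τ) :=
    fun hτ => (h.image_transOf_sseq hwf).le (Set.mem_image_of_mem _ hτ)
  refine and_congr_right fun hσ => ⟨fun hmax => ⟨hconf hσ, fun T hT hσT => ?_⟩, ?_⟩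
  · by_contra hTσ
    obtain ⟨t, -, hen⟩ := hT.exists_enabled_singleton h ⟨hσT, hTσ⟩
    exact hmax ⟨{t}, (append_singleton_mem_sseq_iff hσ (hwf σ hσ)).2 hen⟩
  · rintro hmax ⟨U, hσU⟩
    have hen := (append_singleton_mem_sseq_iff hσ (hwf σ hσ)).1 hσU
    have hle : transOf σ ∪ U ⊆ transOf σ :=
      hmax.le_of_ge (transOf_append_singleton ▸ hconf hσU) Set.subset_union_left
    obtain ⟨u, hu⟩ := hen.1.1
    exact Set.disjoint_left.1 (hen.disjoint fun t ht => (h.pre_post_nonempty ht).1)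
      (hle (Or.inr hu)) hu

theorem IsAcyclicNet.image_transOf_maxsseq (h : N.IsAcyclicNet)
    (hwf : ∀ σ ∈ N.sseq, N.WellFormedSeq σ) :
    transOf '' N.maxsseq = {T | Maximal N.IsConfiguration T} := by
  ext T
  constructor
  · rintro ⟨σ, hσ, rfl⟩
    exact ((h.mem_maxsseq_iff hwf).1 hσ).2
  · intro hT
    obtain ⟨σ, hσ, rfl⟩ := (h.image_transOf_sseq hwf).ge hT.prop
    exact ⟨σ, (h.mem_maxsseq_iff hwf).2 ⟨hσ, hT⟩, rfl⟩

end Net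

theorem stmt16_general {α : Type*} (N : Net α) (h : N.IsAcyclicNet)
    (hwf : ∀ σ ∈ N.sseq, N.WellFormedSeq σ) :
    N.scenarios = N.inducedScenario '' N.sseq ∧
    N.maxscenarios = N.inducedScenario '' N.maxsseq := by
  rw [N.image_inducedScenario, N.image_inducedScenario,
    h.image_transOf_sseq hwf, h.image_transOf_maxsseq hwf]
  exact ⟨h.scenarios_eq_image, h.maxscenarios_eq_image⟩

/-- For a well-formed acyclic net:
(1) `scenarios(AN) = scenario_AN(sseq(AN))`; and
(2) `maxscenarios(AN) = scenario_AN(maxsseq(AN))`. -/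
theorem stmt16 {α : Type*} (N : Net α) (h : N.IsAcyclicNet) (hwf : N.WellFormedNet) :
    N.scenarios = N.inducedScenario '' N.sseq ∧
    N.maxscenarios = N.inducedScenario '' N.maxsseq :=
  stmt16_general N h hwf.2
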